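/- arXiv:2401.01435 — 2 statements merged into one kernel-verified Lean document; each statement's English description precedes it below -/
import Mathlib

section
/- An integer polynomial u is nilpotent at 2 (of some index) if and only if there exists p ∈ ℤ[X] such that u has one of the following forms, and in each case the index of nilpotency is as indicated: (1) u(x) = (x−2)p(x) (index 1); (2) u(x) = (x−1) + p(x)(x−1)(x−2) (index 2); (3) u(x) = −2(x−4) + p(x)(x−2)(x−4) (index 2); (4) u(x) = −3(x−3) + p(x)(x−2)(x−3) (index 2); (5) u(x) = −(x−1)(x−6) + p(x)(x−2)(x−4)(x−6) (index 3); (6) u(x) = −(x−5)(x²−4x+5) + p(x)(x−2)(x−3)(x−4)(x−5) (index 4). -/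
/-!
Write `r i` for the orbit `2 = r 0, r 1, …, r m = 0` with `m` the index of nilpotency. Its first
`m + 1` terms are pairwise distinct, since a repetition would make `0` occur earlier. As
`x - y ∣ u(x) - u(y)`, each difference `r (i + 1) - r i` divides the next. In particular `r 1 - 2`
divides all of them, hence also their sum `0 - 2`, so `r 1 ∈ {1, 3, 4}` when `m ≥ 2`. Moreover
`r (m - 1) - 2` divides `0 - r 1`, leaving finitely many values of `r (m - 1)`, that is, of
the last difference `-r (m - 1)`. Put `e = r 1 - 2` and `t i = (r i - 2) / e`. For `m ≥ 3` the last
difference of `t` turns out to be `±1`, `±3` or `±5`, so that `t` is an injective walk from `0, 1`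
with steps in `{±1, ±q}`, `q` prime, each step dividing the next.

Such a walk is very rigid (`walk_trichotomy`): it runs `0, 1, 2, …`, and as soon as it takes a step
`±q` it continues forever in that direction, above `q` or below `0`. Comparing with the known value
of `t (m - 1)` or `t m` leaves only the orbits `2, 4, 6, 0` and `2, 3, 4, 5, 0`. Finally, prescribing
the values of `u` at the points of an orbit determines `u` modulo the product of the corresponding
linear factors (`eq_add_mul`), and this gives the listed forms.
-/

open Polynomial

/-- `polyIter u n r` is the `n`-fold iterate `u^{(n)}(r)` of the integer polynomial `u` at `r`. -/
def polyIter (u : Polynomial ℤ) (n : ℕ) (r : ℤ) : ℤ := (fun x => u.eval x)^[n] r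

/-- `u` is nilpotent at `r` of index `m`: `m` is the least positive integer with `u^{(m)}(r) = 0`. -/
def NilpotentAt (u : Polynomial ℤ) (r : ℤ) (m : ℕ) : Prop :=
  0 < m ∧ polyIter u m r = 0 ∧ ∀ n : ℕ, 0 < n → n < m → polyIter u n r ≠ 0

/-- An injective integer walk starting `0, 1`, with steps in `{±1, ±q}` each dividing the next, is
the identity up to the first step `±q`, and afterwards stays above `q` (moving up by `q`) or
below `0` (moving down by `q`). The step from `v` to `v - q` must land below `0` because
`0, …, v` have all been visited. -/
lemma walk_trichotomy (t : ℕ → ℤ) (q : ℤ) (hq : 2 ≤ q) (N : ℕ) (h0 : t 0 = 0) (h1 : t 1 = 1)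
    (inj : ∀ i j, i < j → j ≤ N → t i ≠ t j)
    (dv : ∀ i, t (i + 1) - t i ∣ t (i + 2) - t (i + 1))
    (step : ∀ i, i < N → t (i + 1) - t i = 1 ∨ t (i + 1) - t i = -1 ∨
      t (i + 1) - t i = q ∨ t (i + 1) - t i = -q) (i : ℕ) (hi : i + 1 ≤ N) :
    (∀ j, j ≤ i + 1 → t j = j) ∨ (q < t (i + 1) ∧ t (i + 1) - t i = q) ∨
      (t (i + 1) < 0 ∧ t (i + 1) - t i = -q) := by
  induction i with
  | zero =>
    left
    intro j hj
    interval_cases j <;> simp [h0, h1]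
  | succ i ih =>
    have hs := step (i + 1) (by omega)
    have hd := dv i
    have hne := inj i (i + 2) (by omega) (by omega)
    have e2 : i + 1 + 1 = i + 2 := rfl
    rw [e2] at hs ⊢
    have q1 : ¬ q ∣ 1 := fun h => by have := Int.le_of_dvd one_pos h; omega
    have q2 : ¬ q ∣ -1 := fun h => q1 ((dvd_neg).1 h)
    rcases ih (by omega) with h | ⟨h, h'⟩ | ⟨h, h'⟩
    · have a := h i (by omega)
      have b := h (i + 1) (by omega)
      push_cast at b
      rcases hs with hs | hs | hs | hs
      · left
        intro j hj
        rcases Nat.lt_or_ge j (i + 2) with hj' | hj'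
        · exact h j (by omega)
        · obtain rfl : j = i + 2 := by omega
          push_cast
          omega
      · exact absurd (by omega) hne
      · right; left
        exact ⟨by omega, hs⟩
      · right; right
        refine ⟨?_, hs⟩
        by_contra hc
        have hv := h (t (i + 2)).toNat (by omega)
        exact inj (t (i + 2)).toNat (i + 2) (by omega) (by omega) (by omega)
    · rw [h'] at hd
      rcases hs with hs | hs | hs | hs
      · rw [hs] at hd; exact absurd hd q1
      · rw [hs] at hd; exact absurd hd q2
      · right; left
        exact ⟨by omega, hs⟩
      · exact absurd (by omega) hne
    · rw [h', neg_dvd] at hd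
      rcases hs with hs | hs | hs | hs
      · rw [hs] at hd; exact absurd hd q1
      · rw [hs] at hd; exact absurd hd q2
      · exact absurd (by omega) hne
      · right; right
        exact ⟨by omega, hs⟩

lemma dvd_prime_cases {d q : ℤ} (p : ℕ) (hp : p.Prime) (hq : q = p) (h : d ∣ q) :
    d = 1 ∨ d = -1 ∨ d = q ∨ d = -q := by
  subst hq
  have := (Nat.dvd_prime hp).1 (by simpa using Int.natAbs_dvd_natAbs.2 h)
  omega

/-- Integer polynomials agreeing at finitely many points differ by a multiple of the product of the
corresponding linear factors. -/
lemma eq_add_mul (s : Finset ℤ) (u f : ℤ[X]) (h : ∀ a ∈ s, u.eval a = f.eval a) :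
    ∃ p : ℤ[X], u = f + p * ∏ a ∈ s, (X - C a) := by
  have : ∏ a ∈ s, (X - C a) ∣ u - f := by
    refine Finset.prod_dvd_of_isRelPrime ?_ ?_
    · intro a _ b _ hab
      exact ((irreducible_X_sub_C a).isRelPrime_iff_not_dvd).2 fun hd => by
        rw [dvd_iff_isRoot] at hd
        simp [sub_eq_zero] at hd
        exact hab hd
    · intro a ha
      rw [dvd_iff_isRoot]
      simp [h a ha]
  obtain ⟨p, hp⟩ := this
  exact ⟨p, by linear_combination hp⟩

lemma polyIter_succ (u : ℤ[X]) (n : ℕ) (r : ℤ) :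
    polyIter u (n + 1) r = u.eval (polyIter u n r) := by
  simp [polyIter, Function.iterate_succ_apply']

lemma polyIter_sub_dvd (u : ℤ[X]) (r : ℤ) (i j : ℕ) :
    polyIter u i r - polyIter u j r ∣ polyIter u (i + 1) r - polyIter u (j + 1) r := by
  rw [polyIter_succ, polyIter_succ]
  exact sub_dvd_eval_sub _ _ u

lemma polyIter_inj {u : ℤ[X]} {r : ℤ} {m : ℕ} (hr : r ≠ 0) (h : NilpotentAt u r m) (i j : ℕ)
    (hij : i < j) (hj : j ≤ m) : polyIter u i r ≠ polyIter u j r := by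
  intro he
  -- a repetition at `i < j` propagates to positions `m - (j - i)` and `m`
  have key : ∀ k, polyIter u (i + k) r = polyIter u (j + k) r := by
    intro k
    induction k with
    | zero => exact he
    | succ k ih => rw [← add_assoc, ← add_assoc, polyIter_succ, polyIter_succ, ih]
  have hk := key (m - j)
  rw [Nat.add_sub_cancel' hj, h.2.1] at hk
  rcases Nat.eq_zero_or_pos (i + (m - j)) with h0 | h0
  · rw [h0] at hk
    exact hr hk
  · exact h.2.2 _ h0 (by omega) hk

/-- The orbits of length at least three: `2, 4, 6, 0` and `2, 3, 4, 5, 0` are the only ones. -/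
lemma long_orbits {u : ℤ[X]} {n : ℕ} (h : NilpotentAt u 2 (n + 3)) :
    (n = 0 ∧ polyIter u 1 2 = 4 ∧ polyIter u 2 2 = 6) ∨
      (n = 1 ∧ polyIter u 1 2 = 3 ∧ polyIter u 2 2 = 4 ∧ polyIter u 3 2 = 5) := by
  have inj := polyIter_inj two_ne_zero h
  have hm := h.2.1
  have dv := polyIter_sub_dvd u 2
  have r0 : polyIter u 0 2 = 2 := rfl
  generalize polyIter u = R at *
  set r : ℕ → ℤ := fun i => R i 2 with hr
  change ∀ i j, i < j → j ≤ n + 3 → r i ≠ r j at inj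
  change r (n + 3) = 0 at hm
  change ∀ i j, r i - r j ∣ r (i + 1) - r (j + 1) at dv
  change r 0 = 2 at r0
  change (n = 0 ∧ r 1 = 4 ∧ r 2 = 6) ∨ (n = 1 ∧ r 1 = 3 ∧ r 2 = 4 ∧ r 3 = 5)
  clear_value r
  clear hr
  obtain ⟨e, he⟩ : ∃ e, r 1 = 2 + e := ⟨r 1 - 2, by ring⟩
  have hdiv : ∀ i, e ∣ r (i + 1) - r i := by
    intro i
    induction i with
    | zero => exact ⟨1, by rw [zero_add, r0, he]; ring⟩
    | succ i ih => exact ih.trans (dv _ _)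
  have hdiv2 : ∀ i, e ∣ r i - 2 := by
    intro i
    induction i with
    | zero => simp [r0]
    | succ i ih => simpa using dvd_add (hdiv i) ih
  choose t ht using hdiv2
  have e0 : e ≠ 0 := fun h => inj 0 1 (by omega) (by omega) (by rw [r0, he, h]; rfl)
  have hrt : ∀ i, r i = 2 + e * t i := fun i => by linarith [ht i]
  have t0 : t 0 = 0 := by
    have := hrt 0
    rw [r0] at this
    have : e * t 0 = 0 := by linarith
    simpa [e0] using this
  have t1 : t 1 = 1 := by
    have := hrt 1
    rw [he] at this
    exact mul_left_cancel₀ e0 (by linarith)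
  have tinj : ∀ i j, i < j → j ≤ n + 3 → t i ≠ t j := fun i j hij hj hh =>
    inj i j hij hj (by rw [hrt, hrt, hh])
  have tdv : ∀ i, t (i + 1) - t i ∣ t (i + 2) - t (i + 1) := by
    intro i
    have := dv (i + 1) i
    rw [hrt, hrt i, hrt (i + 1 + 1)] at this
    refine (mul_dvd_mul_iff_left e0).1 ?_
    rw [mul_sub, mul_sub]
    simpa only [add_sub_add_left_eq_sub] using this
  have tlast : ∀ i, i < n + 3 → t (i + 1) - t i ∣ t (n + 3) - t (n + 2) := by
    intro i hi
    have : ∀ k, t (i + 1) - t i ∣ t (i + k + 1) - t (i + k) := by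
      intro k
      induction k with
      | zero => exact dvd_rfl
      | succ k ih => exact ih.trans (tdv (i + k))
    have := this (n + 2 - i)
    rwa [show i + (n + 2 - i) = n + 2 by omega] at this
  have he2 : e ∣ 2 := by
    have := ht (n + 3)
    rw [hm] at this
    exact ⟨-t (n + 3), by linarith⟩
  have ha0 : r 1 ≠ 0 := by rw [← hm]; exact inj _ _ (by omega) le_rfl
  have hecases : e = -1 ∨ e = 1 ∨ e = 2 := by
    have := Int.le_of_dvd two_pos he2
    have := Int.le_of_dvd two_pos ((neg_dvd).2 he2)
    omega
  -- `c = r (m - 1)` satisfies `c - 2 ∣ r 1`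
  have hc := dv (n + 2) 0
  rw [r0, hm, zero_sub, dvd_neg, zero_add] at hc
  have hc2 : r 0 ≠ r (n + 2) := inj _ _ (by omega) (by omega)
  have hca : r 1 ≠ r (n + 2) := inj _ _ (by omega) (by omega)
  have hc0 : r (n + 2) ≠ r (n + 3) := inj _ _ (by omega) (by omega)
  have hct := hrt (n + 2)
  have hmt := hrt (n + 3)
  rw [hm] at hmt hc0
  rw [r0] at hc2
  have walk := fun (q : ℤ) (p : ℕ) (hp : p.Prime) (hqp : q = p)
      (hd : t (n + 3) - t (n + 2) ∣ q) =>
    walk_trichotomy t q (by have := hp.two_le; omega) (n + 3) t0 t1 tinj tdv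
      (fun i hi => dvd_prime_cases p hp hqp ((tlast i hi).trans hd))
  -- if the last step is `±1`, no step is `±5`, so that `t` is the identity
  have unit : t (n + 3) - t (n + 2) ∣ 1 → t (n + 2) = (n : ℤ) + 2 := by
    intro hd
    have h1 : ¬ (5 : ℤ) ∣ 1 := by norm_num
    have hl := (tlast (n + 1) (by omega)).trans hd
    rw [show n + 1 + 1 = n + 2 from rfl] at hl
    rcases walk 5 5 (by norm_num) rfl (hd.trans (one_dvd _)) (n + 1) (by omega) with
      h | ⟨_, h⟩ | ⟨_, h⟩
    · simpa using h (n + 2) (by omega)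
    · exact absurd (h ▸ hl) h1
    · rw [show n + 1 + 1 = n + 2 from rfl] at h
      rw [h] at hl
      exact absurd ((neg_dvd).1 hl) h1
  rcases hecases with rfl | rfl | rfl
  · have hc3 : r (n + 2) = 3 := by
      have a1 : r (n + 2) - 2 ∣ 1 := by rwa [he] at hc
      have := Int.le_of_dvd one_pos a1
      have := Int.le_of_dvd one_pos ((neg_dvd).2 a1)
      omega
    have hs : t (n + 3) - t (n + 2) = 3 := by omega
    -- here `t m = 2` is positive, below `q = 3` and different from `m`
    rcases walk 3 3 (by norm_num) rfl (by rw [hs]) (n + 2) (by omega) with h | ⟨h, _⟩ | ⟨h, _⟩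
    · have := h (n + 3) (by omega)
      push_cast at this
      omega
    · rw [show n + 2 + 1 = n + 3 from rfl] at h
      omega
    · rw [show n + 2 + 1 = n + 3 from rfl] at h
      omega
  · have a1 : r (n + 2) - 2 ∣ 3 := by rwa [he] at hc
    have := dvd_prime_cases 3 (by norm_num) rfl a1
    have hcc : r (n + 2) = 5 ∨ r (n + 2) = 1 ∨ r (n + 2) = -1 := by omega
    rcases hcc with h5 | h5 | h5
    · have hs : t (n + 3) - t (n + 2) = -5 := by omega
      rcases walk 5 5 (by norm_num) rfl (by rw [hs]; norm_num) (n + 1) (by omega) with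
        h | ⟨h, _⟩ | ⟨h, _⟩
      · have h2 := h 2 (by omega)
        have hn := h (n + 2) (by omega)
        push_cast at hn h2
        obtain rfl : n = 1 := by omega
        have := hrt 2
        norm_num at h5
        right
        exact ⟨rfl, by omega, by omega, h5⟩
      · rw [show n + 1 + 1 = n + 2 from rfl] at h
        omega
      · rw [show n + 1 + 1 = n + 2 from rfl] at h
        omega
    · have := unit (by rw [show t (n + 3) - t (n + 2) = -1 by omega]; norm_num)
      omega
    · have := unit (by rw [show t (n + 3) - t (n + 2) = 1 by omega])
      omega
  · have a1 : r (n + 2) - 2 ∣ 4 := by rwa [he] at hc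
    have hcc : r (n + 2) = 6 ∨ r (n + 2) = -2 := by
      have := Int.le_of_dvd (by norm_num) a1
      have := Int.le_of_dvd (by norm_num) ((neg_dvd).2 a1)
      omega
    rcases hcc with h5 | h5
    · have hs : t (n + 3) - t (n + 2) = -3 := by omega
      rcases walk 3 3 (by norm_num) rfl (by rw [hs]; norm_num) (n + 1) (by omega) with
        h | ⟨h, _⟩ | ⟨h, _⟩
      · have hn := h (n + 2) (by omega)
        push_cast at hn
        obtain rfl : n = 0 := by omega
        left
        exact ⟨rfl, by omega, h5⟩
      · rw [show n + 1 + 1 = n + 2 from rfl] at h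
        omega
      · rw [show n + 1 + 1 = n + 2 from rfl] at h
        omega
    · have := unit (by rw [show t (n + 3) - t (n + 2) = 1 by omega])
      omega

theorem stmt_9 (u : Polynomial ℤ) :
    (∃ m : ℕ, NilpotentAt u 2 m) ↔
      ∃ p : Polynomial ℤ,
        (u = (X - 2) * p ∧ NilpotentAt u 2 1) ∨
        (u = (X - 1) + p * (X - 1) * (X - 2) ∧ NilpotentAt u 2 2) ∨
        (u = -2 * (X - 4) + p * (X - 2) * (X - 4) ∧ NilpotentAt u 2 2) ∨
        (u = -3 * (X - 3) + p * (X - 2) * (X - 3) ∧ NilpotentAt u 2 2) ∨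
        (u = -((X - 1) * (X - 6)) + p * (X - 2) * (X - 4) * (X - 6) ∧ NilpotentAt u 2 3) ∨
        (u = -((X - 5) * (X ^ 2 - 4 * X + 5)) + p * (X - 2) * (X - 3) * (X - 4) * (X - 5) ∧
          NilpotentAt u 2 4) := by
  constructor
  · rintro ⟨m, h⟩
    have s := polyIter_succ u
    have r0 : polyIter u 0 2 = 2 := rfl
    match m, h with
    | 0, h => exact absurd h.1 (lt_irrefl _)
    | 1, h =>
      have e0 : u.eval 2 = 0 := by rw [← h.2.1, s 0 2, r0]
      obtain ⟨p, hp⟩ := eq_add_mul {2} u 0 (by simp [e0])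
      simp at hp
      exact ⟨p, Or.inl ⟨by rw [hp]; ring, h⟩⟩
    | 2, h =>
      have e0 : u.eval 2 = polyIter u 1 2 := by rw [s 0 2, r0]
      have e1 : u.eval (polyIter u 1 2) = 0 := by rw [← h.2.1, s 1 2]
      have hne := h.2.2 1 one_pos (by norm_num)
      have hne2 := polyIter_inj two_ne_zero h 0 1 (by norm_num) (by norm_num)
      have hd := sub_dvd_eval_sub (polyIter u 1 2) 2 u
      rw [r0] at hne2
      rw [e0, e1] at hd
      generalize polyIter u 1 2 = a at *
      have hd2 : a - 2 ∣ 2 := by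
        have := dvd_add hd (dvd_refl (a - 2))
        rw [show 0 - a + (a - 2) = -2 by ring] at this
        exact (dvd_neg).1 this
      have := dvd_prime_cases 2 (by norm_num) rfl hd2
      have ha : a = 1 ∨ a = 4 ∨ a = 3 := by omega
      rcases ha with rfl | rfl | rfl
      · obtain ⟨p, hp⟩ := eq_add_mul {1, 2} u (X - 1) (by simp [e0, e1])
        simp at hp
        exact ⟨p, Or.inr <| Or.inl ⟨by rw [hp]; ring, h⟩⟩
      · obtain ⟨p, hp⟩ := eq_add_mul {2, 4} u (-2 * (X - 4)) (by simp [e0, e1])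
        simp at hp
        exact ⟨p, Or.inr <| Or.inr <| Or.inl ⟨by rw [hp]; ring, h⟩⟩
      · obtain ⟨p, hp⟩ := eq_add_mul {2, 3} u (-3 * (X - 3)) (by simp [e0, e1])
        simp at hp
        exact ⟨p, Or.inr <| Or.inr <| Or.inr <| Or.inl ⟨by rw [hp]; ring, h⟩⟩
    | n + 3, h =>
      have s0 := s 0 2
      have s1 := s 1 2
      have s2 := s 2 2
      have s3 := s 3 2
      have hm := h.2.1
      norm_num at s0 s1 s2 s3
      rcases long_orbits h with ⟨rfl, h1, h2⟩ | ⟨rfl, h1, h2, h3⟩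
      · norm_num at hm
        rw [r0, h1] at s0
        rw [h1, h2] at s1
        rw [h2, hm] at s2
        obtain ⟨p, hp⟩ := eq_add_mul {2, 4, 6} u (-((X - 1) * (X - 6)))
          (by simp [← s0, ← s1, ← s2])
        simp at hp
        exact ⟨p, Or.inr <| Or.inr <| Or.inr <| Or.inr <| Or.inl ⟨by rw [hp]; ring, h⟩⟩
      · norm_num at hm
        rw [r0, h1] at s0
        rw [h1, h2] at s1
        rw [h2, h3] at s2
        rw [h3, hm] at s3
        obtain ⟨p, hp⟩ := eq_add_mul {2, 3, 4, 5} u (-((X - 5) * (X ^ 2 - 4 * X + 5)))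
          (by simp [← s0, ← s1, ← s2, ← s3])
        simp at hp
        exact ⟨p, Or.inr <| Or.inr <| Or.inr <| Or.inr <| Or.inr ⟨by rw [hp]; ring, h⟩⟩
  · rintro ⟨p, h | h | h | h | h | h⟩ <;> exact ⟨_, h.2⟩
end

section
/- Let u be an integer polynomial and r_0 an integer such that the sequence r_n = u^{(n)}(r_0) (n ≥ 0) is bounded. Then there exist integers S, R and ε ∈ {1, −1} such that the sequence {r_n} has one of the following forms: (1) r_n = S for all n; (2) r_0 = R and r_n = S for all n ≥ 1; (3) r_0 = S+ε, r_1 = S+2ε, and r_n = S for all n ≥ 2; (4) r_0 = S+2ε, r_1 = S+4ε, and r_n = S for all n ≥ 2; (5) r_n = S for all even n and r_n = R for all odd n; (6) r_0 = S+ε, r_n = S for all odd n ≥ 1, r_n = R for all even n ≥ 2, and R − S ≠ ε; (7) r_0 = S+2ε, r_1 = S+ε, r_n = S for all even n ≥ 2, and r_n = S+3ε for all odd n ≥ 3. -/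
/-!
Write `f` for evaluation of `u`. The basic tool is `a - b ∣ f a - f b`, sharpened by the second-order
fact that if `f P = f Q = c` with `P ≠ Q`, then `(X - P) * (X - Q) ∣ f X - c` for every integer `X`
(`mul_dvd_eval_sub`).

A bounded orbit is eventually periodic. Along the periodic part the consecutive differences divide
each other cyclically, so they agree up to sign; they cannot all be equal and nonzero, hence two
neighbours cancel and the orbit is eventually of period at most two
(`exists_two_periodic_of_periodic`).

The orbit is then followed backwards from its periodic part. The predicate `OrbitForm u x` lists, as
finitely many equations, the possible shapes of the orbit of `x`, and `orbitForm_of_eval` shows that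
the list is closed under passing to a preimage: the second-order fact gives the shapes with one
step before a 2-cycle (`preimage_two_cycle`) or two steps before a fixed point (`preimage_fixed`),
and plain divisibility bounds the length of the tail.
-/

open Polynomial

/-- The shapes an orbit of `u` starting at `x` can have, expressed by finitely many values of `u`:
`x` has period dividing two; `u(x)` is fixed; a tail of length two ending in a fixed point `S`
(with two possible step sizes); a tail of length one before a cycle `S, u(S)`; a tail of length two
before a cycle `S, S + 3ε`. -/
def OrbitForm (u : Polynomial ℤ) (x : ℤ) : Prop :=
  u.eval (u.eval x) = x ∨
  u.eval (u.eval x) = u.eval x ∨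
  (∃ S ε : ℤ, (ε = 1 ∨ ε = -1) ∧ x = S + ε ∧ u.eval x = S + 2 * ε ∧
    u.eval (S + 2 * ε) = S ∧ u.eval S = S) ∨
  (∃ S ε : ℤ, (ε = 1 ∨ ε = -1) ∧ x = S + 2 * ε ∧ u.eval x = S + 4 * ε ∧
    u.eval (S + 4 * ε) = S ∧ u.eval S = S) ∨
  (∃ S ε : ℤ, (ε = 1 ∨ ε = -1) ∧ x = S + ε ∧ u.eval x = S ∧
    u.eval (u.eval S) = S ∧ u.eval S ≠ S + ε) ∨
  (∃ S ε : ℤ, (ε = 1 ∨ ε = -1) ∧ x = S + 2 * ε ∧ u.eval x = S + ε ∧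
    u.eval (S + ε) = S ∧ u.eval S = S + 3 * ε ∧ u.eval (S + 3 * ε) = S)

lemma eq_of_dvd_unit {d e : ℤ} (h : d ∣ e) (he : e = 1 ∨ e = -1) : d = 1 ∨ d = -1 := by
  have : d ∣ 1 := by
    rcases he with rfl | rfl
    · exact h
    · simpa using h
  exact Int.isUnit_iff.mp (isUnit_of_dvd_one this)

lemma eq_of_dvd_two {d e : ℤ} (h : d ∣ e) (he : e = 2 ∨ e = -2) :
    d = 1 ∨ d = -1 ∨ d = 2 ∨ d = -2 := by
  have h2 : d ∣ 2 := by
    rcases he with rfl | rfl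
    · exact h
    · simpa using h
  have hle := Int.le_of_dvd (by norm_num) h2
  have hge := Int.le_of_dvd (by norm_num) (neg_dvd.mpr h2)
  have h0 : d ≠ 0 := by
    rintro rfl
    simp at h2
  omega

/-- The first-order divisibility, with the two values named. -/
lemma sub_dvd_of_eval {u : Polynomial ℤ} {a b c d : ℤ} (ha : u.eval a = c) (hb : u.eval b = d) :
    a - b ∣ c - d := by
  subst ha hb
  exact Polynomial.sub_dvd_eval_sub a b u

/-- The second-order divisibility: `u - c` is divisible by `(X - P) * (X - Q)` in `ℤ[X]`. -/
lemma mul_dvd_eval_sub {u : Polynomial ℤ} {P Q c : ℤ} (hP : u.eval P = c) (hQ : u.eval Q = c)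
    (hPQ : P ≠ Q) (x : ℤ) : (x - P) * (x - Q) ∣ u.eval x - c := by
  obtain ⟨q, hq⟩ : X - C P ∣ u - C c := Polynomial.dvd_iff_isRoot.mpr (by simp [hP])
  have hQ0 : q.eval Q = 0 := by
    have h := congrArg (Polynomial.eval Q) hq
    simp only [eval_sub, eval_C, eval_mul, eval_X, hQ, sub_self] at h
    rcases mul_eq_zero.mp h.symm with h | h
    · exact absurd (by linarith) hPQ
    · exact h
  obtain ⟨s, hs⟩ : X - C Q ∣ q := Polynomial.dvd_iff_isRoot.mpr hQ0
  refine ⟨s.eval x, ?_⟩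
  have h := congrArg (Polynomial.eval x) hq
  rw [hs] at h
  simp only [eval_sub, eval_C, eval_mul, eval_X] at h
  rw [h]
  ring

/-- A point entering a genuine 2-cycle `S, R` at `S` from outside is adjacent to `S`. -/
lemma preimage_two_cycle {u : Polynomial ℤ} {x S R : ℤ} (hx : u.eval x = S) (hS : u.eval S = R)
    (hR : u.eval R = S) (hRS : R ≠ S) (hxR : x ≠ R) : x - S = 1 ∨ x - S = -1 := by
  have h := mul_dvd_eval_sub hx hR hxR S
  rw [hS] at h
  have h1 : (S - x) * (S - R) ∣ (-1) * (S - R) := by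
    convert h using 1
    ring
  have h2 := eq_of_dvd_unit (Int.dvd_of_mul_dvd_mul_right (sub_ne_zero.mpr hRS.symm) h1)
    (Or.inr rfl)
  omega

/-- Two genuine steps `x, y` before a fixed point `S` form an arithmetic progression `S, x, y`,
with difference dividing `2`. -/
lemma preimage_fixed {u : Polynomial ℤ} {x y S : ℤ} (hx : u.eval x = y) (hy : u.eval y = S)
    (hS : u.eval S = S) (hyS : y ≠ S) :
    y - S = 2 * (x - S) ∧ (x - S = 1 ∨ x - S = -1 ∨ x - S = 2 ∨ x - S = -2) := by
  have hxS : x - S ≠ 0 := by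
    intro h
    have : x = S := by linarith
    subst this
    exact hyS (hx.symm.trans hS)
  obtain ⟨k, hk⟩ := sub_dvd_of_eval hx hS
  have h2 := sub_dvd_of_eval hx hy
  have h3 : (x - S) * (1 - k) ∣ (x - S) * k := by
    convert h2 using 1
    · linear_combination hk
    · exact hk.symm
  have h4 : 1 - k ∣ k := Int.dvd_of_mul_dvd_mul_left hxS h3
  have h5 : 1 - k ∣ 1 := by
    have := dvd_add h4 (dvd_refl (1 - k))
    simpa using this
  have hk0 : k ≠ 0 := by
    rintro rfl
    apply hyS
    linarith
  have hk2 : k = 2 := by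
    have := eq_of_dvd_unit h5 (Or.inl rfl)
    omega
  clear h3 h4 h5
  subst hk2
  refine ⟨by linarith, ?_⟩
  have h6 := mul_dvd_eval_sub hS hy hyS.symm x
  rw [hx, hk] at h6
  have h7 := Int.dvd_of_mul_dvd_mul_left hxS h6
  have h8 := eq_of_dvd_two h7 (Or.inl rfl)
  omega

lemma orbitForm_of_fixed {u : Polynomial ℤ} {x y S : ℤ} (hx : u.eval x = y) (hy : u.eval y = S)
    (hS : u.eval S = S) : OrbitForm u x := by
  by_cases hyS : y = S
  · right; left
    rw [hx, hy, hyS]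
  obtain ⟨h1, h2⟩ := preimage_fixed hx hy hS hyS
  have hcases : ∃ ε : ℤ, (ε = 1 ∨ ε = -1) ∧ (x - S = ε ∨ x - S = 2 * ε) := by
    rcases h2 with h | h | h | h
    · exact ⟨1, by omega⟩
    · exact ⟨-1, by omega⟩
    · exact ⟨1, by omega⟩
    · exact ⟨-1, by omega⟩
  obtain ⟨ε, hε, h | h⟩ := hcases
  · right; right; left
    have e : y = S + 2 * ε := by linarith
    exact ⟨S, ε, hε, by linarith, by rw [hx, e], by rw [← e, hy], hS⟩
  · right; right; right; left
    have e : y = S + 4 * ε := by linarith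
    exact ⟨S, ε, hε, by linarith, by rw [hx, e], by rw [← e, hy], hS⟩

/-- The list of shapes is closed under passing to a preimage. -/
lemma orbitForm_of_eval {u : Polynomial ℤ} {x : ℤ} (h : OrbitForm u (u.eval x)) :
    OrbitForm u x := by
  obtain ⟨y, hx⟩ : ∃ y, u.eval x = y := ⟨_, rfl⟩
  rw [hx] at h
  rcases h with h | h | ⟨S, ε, hε, hy, hfy, hc, hS⟩ | ⟨S, ε, hε, hy, hfy, hc, hS⟩ |
    ⟨S, ε, hε, hy, hfy, hS, hne⟩ | ⟨S, ε, hε, hy, hfy, hc, hS, hR⟩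
  · by_cases hRS : u.eval y = y
    · right; left
      rw [hx, hRS]
    by_cases hxR : x = u.eval y
    · left
      rw [hx, ← hxR]
    have := preimage_two_cycle hx rfl h hRS hxR
    right; right; right; right; left
    refine ⟨y, x - y, this, by ring, hx, h, ?_⟩
    intro h'
    apply hxR
    rw [h']
    ring
  · exact orbitForm_of_fixed hx rfl h
  -- A tail of length three before a fixed point is excluded by divisibility alone.
  · exfalso
    have a1 := eq_of_dvd_unit (sub_dvd_of_eval hx hS) (by omega)
    have a2 := eq_of_dvd_unit (sub_dvd_of_eval hx hfy) (by omega)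
    omega
  · exfalso
    have a1 := eq_of_dvd_two (sub_dvd_of_eval hx hS) (by omega)
    have a2 := eq_of_dvd_two (sub_dvd_of_eval hx hfy) (by omega)
    have a3 := eq_of_dvd_two (sub_dvd_of_eval hx hc) (by omega)
    omega
  · obtain ⟨R, hR⟩ : ∃ R, u.eval S = R := ⟨_, rfl⟩
    rw [hR] at hS hne
    by_cases hRS : R = S
    · subst hRS
      exact orbitForm_of_fixed hx hfy hR
    have a1 := eq_of_dvd_unit (sub_dvd_of_eval hx hfy) (by omega)
    have a2 := eq_of_dvd_unit (sub_dvd_of_eval hx hS) (by omega)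
    have hxS : x ≠ S := by
      rintro rfl
      apply hne
      rw [← hR, hx, hy]
    have e1 : x = S + 2 * ε := by omega
    have e2 : R = S + 3 * ε := by omega
    right; right; right; right; right
    exact ⟨S, ε, hε, e1, by rw [hx, hy], by rw [← hy, hfy], by rw [hR, e2], by rw [← e2, hS]⟩
  -- A tail of length three before a 2-cycle is likewise impossible.
  · exfalso
    have a1 := eq_of_dvd_unit (sub_dvd_of_eval hx hfy) (by omega)
    have a2 := eq_of_dvd_unit (sub_dvd_of_eval hx hS) (by omega)
    have a3 : x ≠ S + ε := by
      rintro rfl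
      omega
    omega

/-- A periodic integer orbit of `u` contains a point of period dividing two. The consecutive
differences divide each other cyclically, so they all agree up to sign. Either two neighbouring
ones cancel, or the orbit is an arithmetic progression and therefore constant. -/
lemma exists_two_periodic_of_periodic {u : Polynomial ℤ} {s : ℕ → ℤ}
    (hs : ∀ n, s (n + 1) = u.eval (s n)) {p : ℕ} (hp : 0 < p) (hper : s p = s 0) :
    ∃ n, s (n + 2) = s n := by
  have hper' : ∀ n, s (n + p) = s n := by
    intro n
    induction n with
    | zero => simpa using hper
    | succ n ih => rw [show n + 1 + p = n + p + 1 by ring, hs, ih, hs]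
  have hd : ∀ n, s (n + 1) - s n ∣ s (n + 1 + 1) - s (n + 1) := fun n =>
    sub_dvd_of_eval (hs _).symm (hs _).symm
  have hd' : ∀ n k, s (n + 1) - s n ∣ s (n + k + 1) - s (n + k) := by
    intro n k
    induction k with
    | zero => exact dvd_refl _
    | succ k ih => exact ih.trans (hd (n + k))
  by_contra! hcon
  have hstep : ∀ n, s (n + 1 + 1) - s (n + 1) = s (n + 1) - s n := by
    intro n
    have h1 := hd' (n + 1) (p - 1)
    rw [show n + 1 + (p - 1) = n + p by omega, hper', show n + p + 1 = n + 1 + p by ring,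
      hper'] at h1
    have h2 := Int.natAbs_eq_natAbs_iff.mp (Int.natAbs_eq_of_dvd_dvd (hd n) h1)
    have h3 : s (n + 1 + 1) ≠ s n := hcon n
    omega
  have hconst : ∀ n, s (n + 1) - s n = s 1 - s 0 := by
    intro n
    induction n with
    | zero => rfl
    | succ n ih => rw [hstep, ih]
  have hlin : ∀ n : ℕ, s n = s 0 + n * (s 1 - s 0) := by
    intro n
    induction n with
    | zero => simp
    | succ n ih =>
      have := hconst n
      push_cast
      linarith
  have h0 : (p : ℤ) * (s 1 - s 0) = 0 := by
    have := hlin p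
    linarith
  have h1 : s 1 - s 0 = 0 := by
    rcases mul_eq_zero.mp h0 with h | h
    · omega
    · exact h
  apply hcon 0
  have := hlin 2
  rw [h1] at this
  simpa using this

lemma orbit_fixed {u : Polynomial ℤ} {r : ℕ → ℤ} (hs : ∀ n, r (n + 1) = u.eval (r n)) {k : ℕ}
    {S : ℤ} (hk : r k = S) (hS : u.eval S = S) : ∀ n, k ≤ n → r n = S := by
  intro n hn
  induction n, hn using Nat.le_induction with
  | base => exact hk
  | succ n _ ih => rw [hs, ih, hS]

lemma orbit_two_cycle {u : Polynomial ℤ} {r : ℕ → ℤ} (hs : ∀ n, r (n + 1) = u.eval (r n)) {k : ℕ}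
    {S R : ℤ} (hk : r k = S) (hS : u.eval S = R) (hR : u.eval R = S) (m : ℕ) :
    r (k + 2 * m) = S ∧ r (k + 2 * m + 1) = R := by
  induction m with
  | zero => exact ⟨hk, by rw [mul_zero, add_zero, hs, hk, hS]⟩
  | succ m ih =>
    have h : r (k + 2 * (m + 1)) = S := by
      rw [show k + 2 * (m + 1) = k + 2 * m + 1 + 1 by ring, hs, ih.2, hR]
    exact ⟨h, by rw [hs, h, hS]⟩

theorem stmt_16 (u : Polynomial ℤ) (r0 : ℤ) (r : ℕ → ℤ)
    (hr : ∀ n : ℕ, r n = polyIter u n r0)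
    (hbd : ∃ B : ℤ, ∀ n : ℕ, |r n| ≤ B) :
    ∃ S R ε : ℤ, (ε = 1 ∨ ε = -1) ∧
      ((∀ n : ℕ, r n = S) ∨
       (r 0 = R ∧ ∀ n : ℕ, 1 ≤ n → r n = S) ∨
       (r 0 = S + ε ∧ r 1 = S + 2 * ε ∧ ∀ n : ℕ, 2 ≤ n → r n = S) ∨
       (r 0 = S + 2 * ε ∧ r 1 = S + 4 * ε ∧ ∀ n : ℕ, 2 ≤ n → r n = S) ∨
       ((∀ n : ℕ, Even n → r n = S) ∧ (∀ n : ℕ, Odd n → r n = R)) ∨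
       (r 0 = S + ε ∧ (∀ n : ℕ, Odd n → r n = S) ∧
         (∀ n : ℕ, Even n → 2 ≤ n → r n = R) ∧ R - S ≠ ε) ∨
       (r 0 = S + 2 * ε ∧ r 1 = S + ε ∧ (∀ n : ℕ, Even n → 2 ≤ n → r n = S) ∧
         (∀ n : ℕ, Odd n → 3 ≤ n → r n = S + 3 * ε))) := by
  have hs : ∀ n, r (n + 1) = u.eval (r n) := by
    intro n
    rw [hr, hr, polyIter, polyIter, Function.iterate_succ_apply']
  obtain ⟨B, hB⟩ := hbd
  -- Pigeonhole on the finite interval `[-B, B]` makes the orbit eventually periodic.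
  obtain ⟨i, p, hp, hip⟩ : ∃ i p : ℕ, 0 < p ∧ r (i + p) = r i := by
    have hmaps : Set.MapsTo r Set.univ (Set.Icc (-B) B) := fun n _ => abs_le.mp (hB n)
    obtain ⟨i, -, j, -, hij, h⟩ :=
      Set.infinite_univ.exists_lt_map_eq_of_mapsTo hmaps (Set.finite_Icc _ _)
    exact ⟨i, j - i, by omega, by rw [show i + (j - i) = j by omega, h]⟩
  obtain ⟨m, hm⟩ := exists_two_periodic_of_periodic (u := u) (s := fun n => r (i + n))
    (fun n => hs (i + n)) hp hip
  have hN : OrbitForm u (r (i + m)) := by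
    left
    rw [← hs, ← hs]
    exact hm
  have hdown : ∀ n, OrbitForm u (r n) → OrbitForm u (r 0) := by
    intro n
    induction n with
    | zero => exact id
    | succ n ih =>
      intro h
      rw [hs] at h
      exact ih (orbitForm_of_eval h)
  have h1 : r 1 = u.eval (r 0) := hs 0
  have h2 : r 2 = u.eval (r 1) := hs 1
  rcases hdown _ hN with h | h | ⟨S, ε, hε, hy, hfy, hc, hS⟩ | ⟨S, ε, hε, hy, hfy, hc, hS⟩ |
    ⟨S, ε, hε, hy, hfy, hS, hne⟩ | ⟨S, ε, hε, hy, hfy, hc, hS, hR⟩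
  · have hcyc := orbit_two_cycle hs (k := 0) rfl h1.symm (by rw [h1, h])
    refine ⟨r 0, r 1, 1, Or.inl rfl, ?_⟩
    right; right; right; right; left
    constructor
    · rintro n ⟨k, rfl⟩
      rw [show k + k = 0 + 2 * k by ring, (hcyc k).1]
    · rintro n ⟨k, rfl⟩
      rw [show 2 * k + 1 = 0 + 2 * k + 1 by ring, (hcyc k).2]
  · refine ⟨r 1, r 0, 1, Or.inl rfl, ?_⟩
    right; left
    exact ⟨rfl, orbit_fixed hs rfl (by rw [h1, h])⟩
  · rw [hfy] at h1
    refine ⟨S, 0, ε, hε, ?_⟩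
    right; right; left
    exact ⟨hy, h1, orbit_fixed hs (by rw [h2, h1, hc]) hS⟩
  · rw [hfy] at h1
    refine ⟨S, 0, ε, hε, ?_⟩
    right; right; right; left
    exact ⟨hy, h1, orbit_fixed hs (by rw [h2, h1, hc]) hS⟩
  · rw [hfy] at h1
    have hcyc := orbit_two_cycle hs h1 rfl hS
    refine ⟨S, u.eval S, ε, hε, ?_⟩
    right; right; right; right; right; left
    refine ⟨hy, ?_, ?_, fun h => hne (by linarith)⟩
    · rintro n ⟨k, rfl⟩
      rw [add_comm, (hcyc k).1]
    · rintro n ⟨k, rfl⟩ hk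
      rw [show k + k = 1 + 2 * (k - 1) + 1 by omega, (hcyc _).2]
  · rw [hfy] at h1
    have hcyc := orbit_two_cycle hs (k := 2) (by rw [h2, h1, hc]) hS hR
    refine ⟨S, 0, ε, hε, ?_⟩
    right; right; right; right; right; right
    refine ⟨hy, h1, ?_, ?_⟩
    · rintro n ⟨k, rfl⟩ hk
      rw [show k + k = 2 + 2 * (k - 1) by omega, (hcyc _).1]
    · rintro n ⟨k, rfl⟩ hk
      rw [show 2 * k + 1 = 2 + 2 * (k - 1) + 1 by omega, (hcyc _).2]
end
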